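/- Let Φ be a continuous flow on a compact metric space X, μ an ergodic Φ-invariant Borel probability measure, and P, Q finite Borel partitions of X. For every δ > 0 there exist a Borel set H of μ-generic points with μ(H) > 1-δ and t_0 > 1 such that for all x, y ∈ H and t ≥ t_0: f_t(x,y,P) ≤ 4 f_t(x,y,Q) + 2 d_μ(P,Q) + δ. -/

import Mathlib

open MeasureTheory Filter Set Topology
open scoped ENNReal symmDiff

section FK

structure IsFlow {X : Type*} [TopologicalSpace X] (Φ : ℝ → X → X) : Prop where
  cont : Continuous fun p : ℝ × X => Φ p.1 p.2
  map_zero : ∀ x, Φ 0 x = x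
  map_add : ∀ t s x, Φ (t + s) x = Φ s (Φ t x)

variable {X : Type*} [MetricSpace X]

/-- `x` and `y` are `(t,ε,δ)`-matchable: there are measurable `A, A' ⊆ [0,t]` of Lebesgue
measure `> (1-ε)t` and an increasing absolutely continuous onto map `h : A → A'`
(with a.e. derivative `h'`) with `|h' - 1| < ε` and `d(φ^s x, φ^{h s} y) < δ` on `A`. -/
def Matchable (Φ : ℝ → X → X) (x y : X) (t ε δ : ℝ) : Prop :=
  ∃ (A A' : Set ℝ) (h h' : ℝ → ℝ),
    MeasurableSet A ∧ MeasurableSet A' ∧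
    A ⊆ Icc 0 t ∧ A' ⊆ Icc 0 t ∧
    ENNReal.ofReal ((1 - ε) * t) < volume A ∧
    ENNReal.ofReal ((1 - ε) * t) < volume A' ∧
    MapsTo h A A' ∧ SurjOn h A A' ∧ StrictMonoOn h A ∧
    (∀ B ⊆ A, MeasurableSet B → volume (h '' B) = ENNReal.ofReal (∫ s in B, h' s)) ∧
    (∀ s ∈ A, |h' s - 1| < ε) ∧
    (∀ s ∈ A, dist (Φ s x) (Φ (h s) y) < δ)

/-- The `(t,δ)`-gap `f̃_{t,δ}(x,y)`; by convention it equals `1` when no matching exists. -/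
noncomputable def fkGap (Φ : ℝ → X → X) (t δ : ℝ) (x y : X) : ℝ :=
  sInf ({ε : ℝ | 0 < ε ∧ Matchable Φ x y t ε δ} ∪ {1})

/-- `f̃_δ(x,y) = limsup_{t → ∞} f̃_{t,δ}(x,y)`. -/
noncomputable def fkDist (Φ : ℝ → X → X) (δ : ℝ) (x y : X) : ℝ :=
  Filter.limsup (fun t => fkGap Φ t δ x y) Filter.atTop

/-- The Feldman–Katok pseudometric for flows. -/
noncomputable def rhoFK (Φ : ℝ → X → X) (x y : X) : ℝ :=
  sInf {δ : ℝ | 0 < δ ∧ fkDist Φ δ x y < δ}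

/-- Discrete `(n,δ)`-matching of cardinality `k` for a map `T`. -/
def DMatching (T : X → X) (x y : X) (n : ℕ) (δ : ℝ) (k : ℕ) : Prop :=
  ∃ (D D' : Finset ℕ) (π : ℕ → ℕ),
    D ⊆ Finset.range n ∧ D' ⊆ Finset.range n ∧ D.card = k ∧
    Set.BijOn π ↑D ↑D' ∧ StrictMonoOn π ↑D ∧
    ∀ i ∈ D, dist (T^[i] x) (T^[π i] y) < δ

/-- The discrete `(n,δ)`-gap `f̄_{n,δ}(x,y)`. -/
noncomputable def dGap (T : X → X) (n : ℕ) (δ : ℝ) (x y : X) : ℝ :=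
  1 - ((sSup {k : ℕ | DMatching T x y n δ k} : ℕ) : ℝ) / n

/-- `f̄_δ(x,y) = limsup_{n → ∞} f̄_{n,δ}(x,y)`. -/
noncomputable def dFKdist (T : X → X) (δ : ℝ) (x y : X) : ℝ :=
  Filter.limsup (fun n : ℕ => dGap T n δ x y) Filter.atTop

/-- The discrete Feldman–Katok pseudometric. -/
noncomputable def dRhoFK (T : X → X) (x y : X) : ℝ :=
  sInf {δ : ℝ | 0 < δ ∧ dFKdist T δ x y ≤ δ}

variable [MeasurableSpace X] [BorelSpace X]

/-- The `t`-empirical measure `μ_{x,t} = (1/t) ∫_0^t δ_{φ^s x} ds`. -/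
noncomputable def empMeasure (Φ : ℝ → X → X) (x : X) (t : ℝ) : Measure X :=
  (ENNReal.ofReal (1 / t)) • Measure.map (fun s => Φ s x) (volume.restrict (Icc 0 t))

/-- `x` is generic for `μ`: empirical measures converge to `μ` in the weak* topology. -/
def Generic (Φ : ℝ → X → X) (μ : Measure X) (x : X) : Prop :=
  ∀ f : C(X, ℝ), Tendsto (fun t => ∫ z, f z ∂(empMeasure Φ x t)) atTop (𝓝 (∫ z, f z ∂μ))

def FlowInvariant (Φ : ℝ → X → X) (μ : Measure X) : Prop :=
  ∀ t : ℝ, MeasurePreserving (Φ t) μ μ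

def FlowErgodic (Φ : ℝ → X → X) (μ : Measure X) : Prop :=
  FlowInvariant Φ μ ∧
    ∀ A : Set X, MeasurableSet A → (∀ t, Φ t ⁻¹' A = A) → μ A = 0 ∨ μ A = 1

/-- The Prokhorov metric. -/
noncomputable def prokhorov (μ ν : Measure X) : ℝ :=
  sInf {ε : ℝ | 0 < ε ∧ ∀ B : Set X, MeasurableSet B →
    μ B ≤ ν (Metric.thickening ε B) + ENNReal.ofReal ε}

/-- A finite Borel partition of `X`, indexed by `ℕ` with all but finitely many cells empty. -/
structure BPartition (X : Type*) [MeasurableSpace X] where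
  cells : ℕ → Set X
  measurable : ∀ j, MeasurableSet (cells j)
  disj : Pairwise (Function.onFun Disjoint cells)
  cover : ⋃ j, cells j = Set.univ
  finite : ∃ n, ∀ j, n ≤ j → cells j = ∅

/-- The partition pseudometric `d_μ(P,Q)` (infimum over orderings of
`μ {x : P(x) ≠ Q(x)}`). -/
noncomputable def dPart (μ : Measure X) (P Q : ℕ → Set X) : ℝ :=
  ⨅ σ : Equiv.Perm ℕ, (μ (⋃ j, P j \ Q (σ j))).toReal

/-- `(t,ε,P)`-matchability with respect to a partition `P` (Ratner). -/
def PMatchable (Φ : ℝ → X → X) (P : ℕ → Set X) (x y : X) (t ε : ℝ) : Prop :=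
  ∃ (A A' : Set ℝ) (h h' : ℝ → ℝ),
    MeasurableSet A ∧ MeasurableSet A' ∧
    A ⊆ Icc 0 t ∧ A' ⊆ Icc 0 t ∧
    ENNReal.ofReal ((1 - ε) * t) < volume A ∧
    ENNReal.ofReal ((1 - ε) * t) < volume A' ∧
    MapsTo h A A' ∧ SurjOn h A A' ∧ StrictMonoOn h A ∧
    (∀ B ⊆ A, MeasurableSet B → volume (h '' B) = ENNReal.ofReal (∫ s in B, h' s)) ∧
    (∀ s ∈ A, |h' s - 1| < ε) ∧
    (∀ s ∈ A, ∀ j, Φ s x ∈ P j ↔ Φ (h s) y ∈ P j)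

/-- `f_t(x,y,P)`. -/
noncomputable def fPart (Φ : ℝ → X → X) (P : ℕ → Set X) (t : ℝ) (x y : X) : ℝ :=
  sInf ({ε : ℝ | 0 < ε ∧ PMatchable Φ P x y t ε} ∪ {1})

/-- The `(t,P)`-ball of radius `ε` centered at `x`. -/
def PBall (Φ : ℝ → X → X) (P : ℕ → Set X) (t ε : ℝ) (x : X) : Set X :=
  {y | fPart Φ P t x y < ε}

/-- `K_t(ε,P)`: minimal cardinality of an `(ε,t,P)`-cover (`⊤` if none exists). -/
noncomputable def Kt (μ : Measure X) (Φ : ℝ → X → X) (P : ℕ → Set X) (ε t : ℝ) : ℝ≥0∞ :=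
  sInf ((fun C : Finset X => (C.card : ℝ≥0∞)) ''
    {C : Finset X | ENNReal.ofReal (1 - ε) < μ (⋃ x ∈ C, PBall Φ P t ε x)})

/-- `β(u,ε,P) = liminf_{t→∞} log K_t(ε,P) / u(t)`. -/
noncomputable def betaU (μ : Measure X) (Φ : ℝ → X → X) (P : ℕ → Set X) (u : ℝ → ℝ)
    (ε : ℝ) : EReal :=
  Filter.liminf (fun t => ENNReal.log (Kt μ Φ P ε t) / (ENNReal.ofReal (u t) : EReal))
    Filter.atTop

/-- `e(u,P) = limsup_{ε→0⁺} β(u,ε,P)`. -/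
noncomputable def eUP (μ : Measure X) (Φ : ℝ → X → X) (P : ℕ → Set X) (u : ℝ → ℝ) : EReal :=
  Filter.limsup (fun ε => betaU μ Φ P u ε) (𝓝[>] (0 : ℝ))

/-- `e(Φ,u) = sup_P e(u,P)`. -/
noncomputable def ePhi (μ : Measure X) (Φ : ℝ → X → X) (u : ℝ → ℝ) : EReal :=
  ⨆ P : BPartition X, eUP μ Φ P.cells u

end FK

/-- The running maximum of the Birkhoff sums `S₀ = 0, S₁, …, S_N` of `G` under `T`. -/
noncomputable def birkhoffMax {X : Type*} (T : X → X) (G : X → ℝ) : ℕ → X → ℝ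
  | 0, _ => 0
  | n + 1, x => max 0 (G x + birkhoffMax T G n (T x))

section BirkhoffMax

variable {X : Type*} {T : X → X} {G : X → ℝ}

lemma birkhoffMax_nonneg (n : ℕ) (x : X) : 0 ≤ birkhoffMax T G n x := by
  cases n with
  | zero => exact le_rfl
  | succ n => exact le_max_left _ _

lemma birkhoffMax_le_succ (n : ℕ) (x : X) :
    birkhoffMax T G n x ≤ birkhoffMax T G (n + 1) x := by
  induction n generalizing x with
  | zero => exact birkhoffMax_nonneg _ _
  | succ n ih => exact max_le_max le_rfl (by simpa using ih (T x))

lemma birkhoffSum_le_birkhoffMax (n : ℕ) (x : X) :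
    birkhoffSum T G n x ≤ birkhoffMax T G n x := by
  induction n generalizing x with
  | zero => simp [birkhoffMax]
  | succ n ih =>
    rw [birkhoffSum_succ']
    exact le_max_of_le_right (by simpa using ih (T x))

lemma birkhoffMax_sub_comp_le_indicator (n : ℕ) (x : X) :
    birkhoffMax T G n x - birkhoffMax T G n (T x) ≤
      {z | 0 < birkhoffMax T G n z}.indicator G x := by
  by_cases hx : 0 < birkhoffMax T G n x
  · rw [indicator_of_mem (by exact hx)]
    cases n with
    | zero => simp [birkhoffMax] at hx
    | succ n =>
      have h1 : birkhoffMax T G (n + 1) x = G x + birkhoffMax T G n (T x) := by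
        change max 0 _ = _
        refine max_eq_right (le_of_lt ?_)
        by_contra hneg
        exact hx.ne' (max_eq_left (not_lt.1 hneg))
      have h2 := birkhoffMax_le_succ (T := T) (G := G) n (T x)
      linarith
  · rw [indicator_of_notMem (by exact hx)]
    linarith [birkhoffMax_nonneg (T := T) (G := G) n (T x)]

variable [MeasurableSpace X] {μ : Measure X}

lemma measurable_birkhoffMax (hT : Measurable T) (hG : Measurable G) (n : ℕ) :
    Measurable (birkhoffMax T G n) := by
  induction n with
  | zero => exact measurable_const
  | succ n ih => exact measurable_const.max (hG.add (ih.comp hT))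

lemma integrable_birkhoffMax (hT : MeasurePreserving T μ μ) (hG : Integrable G μ) (n : ℕ) :
    Integrable (birkhoffMax T G n) μ := by
  induction n with
  | zero => exact integrable_zero _ _ _
  | succ n ih =>
    exact (integrable_zero X ℝ μ).sup (hG.add (hT.integrable_comp_of_integrable ih))

/-- Maximal ergodic theorem: if almost every point has a positive Birkhoff sum of `G`, then
`G` has nonnegative integral. -/
theorem integral_nonneg_of_ae_exists_birkhoffSum_pos (hT : MeasurePreserving T μ μ)
    (hGm : Measurable G) (hG : Integrable G μ) (h : ∀ᵐ x ∂μ, ∃ n, 0 < birkhoffSum T G n x) :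
    0 ≤ ∫ x, G x ∂μ := by
  have hpos : ∀ n, 0 ≤ ∫ x, {z | 0 < birkhoffMax T G n z}.indicator G x ∂μ := fun n => by
    have hM := integrable_birkhoffMax hT hG n
    have hMT : Integrable (fun x => birkhoffMax T G n (T x)) μ :=
      hT.integrable_comp_of_integrable hM
    have hms : MeasurableSet {z | 0 < birkhoffMax T G n z} :=
      measurableSet_lt measurable_const (measurable_birkhoffMax hT.measurable hGm n)
    have h0 : ∫ x, (birkhoffMax T G n x - birkhoffMax T G n (T x)) ∂μ = 0 := by
      have hmap := integral_map (μ := μ) (f := birkhoffMax T G n) hT.measurable.aemeasurable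
        (measurable_birkhoffMax hT.measurable hGm n).aestronglyMeasurable
      rw [hT.map_eq] at hmap
      rw [integral_sub hM hMT, ← hmap, sub_self]
    exact h0.ge.trans (integral_mono (hM.sub hMT) (hG.indicator hms)
      (birkhoffMax_sub_comp_le_indicator n))
  refine ge_of_tendsto' (tendsto_integral_of_dominated_convergence (fun x => ‖G x‖)
    (fun n => (hGm.indicator (measurableSet_lt measurable_const
      (measurable_birkhoffMax hT.measurable hGm n))).aestronglyMeasurable)
    hG.norm (fun n => ae_of_all _ fun x => norm_indicator_le_norm_self _ _) ?_) hpos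
  filter_upwards [h] with x ⟨n, hn⟩
  refine tendsto_const_nhds.congr' ?_
  filter_upwards [eventually_ge_atTop n] with m hm
  have hmono : Monotone fun k => birkhoffMax T G k x :=
    monotone_nat_of_le_succ fun k => birkhoffMax_le_succ k x
  have hxm : x ∈ {z | 0 < birkhoffMax T G m z} :=
    (hn.trans_le (birkhoffSum_le_birkhoffMax n x)).trans_le (hmono hm)
  exact (indicator_of_mem hxm G).symm

end BirkhoffMax

section FlowAverages

lemma abs_integral_orbit_le {X : Type*} {Φ : ℝ → X → X} {f : X → ℝ} {C : ℝ}
    (hC : ∀ x, |f x| ≤ C) (x : X) (a b : ℝ) :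
    |∫ s in a..b, f (Φ s x)| ≤ C * |b - a| := by
  rw [← Real.norm_eq_abs]
  exact intervalIntegral.norm_integral_le_of_norm_le_const fun s _ => hC _

variable {X : Type*} [MetricSpace X] {Φ : ℝ → X → X}

lemma IsFlow.continuous_orbit (hΦ : IsFlow Φ) (x : X) : Continuous fun s => Φ s x :=
  hΦ.cont.comp (continuous_id.prodMk continuous_const)

lemma IsFlow.iterate_time_one (hΦ : IsFlow Φ) (n : ℕ) (x : X) : (Φ 1)^[n] x = Φ n x := by
  induction n with
  | zero => simp [hΦ.map_zero]
  | succ n ih => rw [Function.iterate_succ_apply', ih, ← hΦ.map_add, Nat.cast_succ]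

lemma IsFlow.integral_orbit_shift (hΦ : IsFlow Φ) (f : X → ℝ) (a T : ℝ) (x : X) :
    ∫ s in (0 : ℝ)..T, f (Φ s (Φ a x)) = ∫ s in a..(a + T), f (Φ s x) := by
  simp_rw [← hΦ.map_add]
  rw [intervalIntegral.integral_comp_add_left (fun s => f (Φ s x)) a, add_zero]

variable [MeasurableSpace X] [BorelSpace X] {f : X → ℝ} {C : ℝ}

lemma IsFlow.intervalIntegrable_orbit (hΦ : IsFlow Φ) (hf : Measurable f)
    (hC : ∀ x, |f x| ≤ C) (x : X) (a b : ℝ) :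
    IntervalIntegrable (fun s => f (Φ s x)) volume a b :=
  (intervalIntegrable_const (c := C)).mono_fun
    (hf.comp (hΦ.continuous_orbit x).measurable).aestronglyMeasurable
    (ae_of_all _ fun s => by
      exact (hC _).trans (le_abs_self C))

lemma IsFlow.abs_integral_orbit_sub_le (hΦ : IsFlow Φ) (hf : Measurable f)
    (hC : ∀ x, |f x| ≤ C) (x : X) (a T : ℝ) :
    |(∫ s in (0 : ℝ)..T, f (Φ s (Φ a x))) - ∫ s in (0 : ℝ)..T, f (Φ s x)| ≤ 2 * C * |a| := by
  have hi := hΦ.intervalIntegrable_orbit hf hC x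
  have h1 : (∫ s in (0 : ℝ)..T, f (Φ s (Φ a x))) - ∫ s in (0 : ℝ)..T, f (Φ s x) =
      (∫ s in T..(a + T), f (Φ s x)) - ∫ s in (0 : ℝ)..a, f (Φ s x) := by
    rw [hΦ.integral_orbit_shift]
    linarith [intervalIntegral.integral_add_adjacent_intervals (hi 0 a) (hi a (a + T)),
      intervalIntegral.integral_add_adjacent_intervals (hi 0 T) (hi T (a + T))]
  have h2 := abs_integral_orbit_le (Φ := Φ) hC x T (a + T)
  have h3 := abs_integral_orbit_le (Φ := Φ) hC x 0 a
  rw [add_sub_cancel_right] at h2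
  rw [sub_zero] at h3
  rw [h1]
  linarith [abs_sub (∫ s in T..(a + T), f (Φ s x)) (∫ s in (0 : ℝ)..a, f (Φ s x))]

lemma IsFlow.birkhoffSum_time_one (hΦ : IsFlow Φ) (hf : Measurable f) (hC : ∀ x, |f x| ≤ C)
    (n : ℕ) (x : X) :
    birkhoffSum (Φ 1) (fun z => ∫ s in (0 : ℝ)..1, f (Φ s z)) n x =
      ∫ s in (0 : ℝ)..n, f (Φ s x) := by
  have h := intervalIntegral.sum_integral_adjacent_intervals (a := fun k : ℕ => (k : ℝ)) (n := n)
    (f := fun s => f (Φ s x)) (μ := volume)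
    (fun k _ => hΦ.intervalIntegrable_orbit hf hC x _ _)
  simp only [Nat.cast_zero] at h
  rw [← h, birkhoffSum]
  refine Finset.sum_congr rfl fun k _ => ?_
  rw [hΦ.iterate_time_one, hΦ.integral_orbit_shift, Nat.cast_succ]

variable [SecondCountableTopology X]

lemma IsFlow.measurable_integral_orbit (hΦ : IsFlow Φ) (hf : Measurable f) (a b : ℝ) :
    Measurable fun x => ∫ s in a..b, f (Φ s x) := by
  have hm : StronglyMeasurable fun p : X × ℝ => f (Φ p.2 p.1) :=
    (hf.comp (hΦ.cont.measurable.comp measurable_swap)).stronglyMeasurable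
  exact (hm.integral_prod_right (ν := volume.restrict (Ioc a b))).measurable.sub
    (hm.integral_prod_right (ν := volume.restrict (Ioc b a))).measurable

variable {μ : Measure X} [IsProbabilityMeasure μ]

lemma IsFlow.integral_integral_orbit (hΦ : IsFlow Φ) (hμ : FlowInvariant Φ μ)
    (hf : Measurable f) (hC : ∀ x, |f x| ≤ C) :
    ∫ x, (∫ s in (0 : ℝ)..1, f (Φ s x)) ∂μ = ∫ x, f x ∂μ := by
  have hm : Measurable fun p : X × ℝ => f (Φ p.2 p.1) :=
    hf.comp (hΦ.cont.measurable.comp measurable_swap)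
  have hint : Integrable (Function.uncurry fun (x : X) (s : ℝ) => f (Φ s x))
      (μ.prod (volume.restrict (Ioc 0 1))) :=
    Integrable.of_bound hm.aestronglyMeasurable C (ae_of_all _ fun p => hC _)
  have hinv : ∀ s, ∫ x, f (Φ s x) ∂μ = ∫ x, f x ∂μ := fun s => by
    rw [← integral_map (hμ s).measurable.aemeasurable hf.aestronglyMeasurable, (hμ s).map_eq]
  simp_rw [intervalIntegral.integral_of_le zero_le_one]
  rw [integral_integral_swap hint]
  simp [hinv]

/-- One-sided pointwise ergodic theorem: time averages of a bounded function are eventually below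
any constant exceeding its mean. -/
theorem FlowErgodic.ae_eventually_integral_orbit_le (hμ : FlowErgodic Φ μ) (hΦ : IsFlow Φ)
    (hf : Measurable f) (hC : ∀ x, |f x| ≤ C) {c : ℝ} (hc : ∫ x, f x ∂μ < c) :
    ∀ᵐ x ∂μ, ∀ᶠ n : ℕ in atTop, ∫ s in (0 : ℝ)..n, f (Φ s x) ≤ c * n := by
  obtain ⟨c', hc', hcc'⟩ := exists_between hc
  set D : Set X := {x | ∃ k : ℕ, ∃ᶠ n : ℕ in atTop,
    (c' + 1 / ((k : ℝ) + 1)) * n < ∫ s in (0 : ℝ)..n, f (Φ s x)} with hD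
  have hDm : MeasurableSet D := by
    have : D = ⋃ k : ℕ, limsup (fun n : ℕ =>
        {x | (c' + 1 / ((k : ℝ) + 1)) * n < ∫ s in (0 : ℝ)..n, f (Φ s x)}) atTop := by
      ext x
      simp [hD, mem_limsup_iff_frequently_mem]
    rw [this]
    exact MeasurableSet.iUnion fun k => MeasurableSet.measurableSet_limsup fun n =>
      measurableSet_lt measurable_const (hΦ.measurable_integral_orbit hf _ _)
  have hsub : ∀ a x, x ∈ D → Φ a x ∈ D := by
    rintro a x ⟨k, hk⟩
    refine ⟨k + 1, ?_⟩
    have hgap : 0 < 1 / ((k : ℝ) + 1) - 1 / (((k + 1 : ℕ) : ℝ) + 1) := by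
      rw [sub_pos]
      apply one_div_lt_one_div_of_lt <;> push_cast <;> linarith [k.cast_nonneg (α := ℝ)]
    have hev : ∀ᶠ n : ℕ in atTop,
        2 * C * |a| ≤ (1 / ((k : ℝ) + 1) - 1 / (((k + 1 : ℕ) : ℝ) + 1)) * n :=
      (tendsto_natCast_atTop_atTop.const_mul_atTop hgap).eventually_ge_atTop _
    refine (hk.and_eventually hev).mono ?_
    rintro n ⟨h1, h2⟩
    have h3 := neg_le_of_abs_le (hΦ.abs_integral_orbit_sub_le hf hC x a n)
    nlinarith
  have hinv : ∀ a, Φ a ⁻¹' D = D := fun a => by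
    refine Subset.antisymm (fun x hx => ?_) (fun x hx => hsub a x hx)
    have := hsub (-a) _ hx
    rwa [← hΦ.map_add, add_neg_cancel, hΦ.map_zero] at this
  have hD0 : μ D = 0 := by
    refine (hμ.2 D hDm hinv).resolve_right fun h1 => ?_
    have hae : ∀ᵐ x ∂μ, x ∈ D := (mem_ae_iff_prob_eq_one hDm).2 h1
    set F : X → ℝ := fun z => ∫ s in (0 : ℝ)..1, f (Φ s z)
    have hFm : Measurable F := hΦ.measurable_integral_orbit hf _ _
    have hFi : Integrable F μ := Integrable.of_bound hFm.aestronglyMeasurable C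
      (ae_of_all _ fun x => by simpa using abs_integral_orbit_le (Φ := Φ) hC x 0 1)
    have hnn := integral_nonneg_of_ae_exists_birkhoffSum_pos (hμ.1 1)
      (hFm.sub (measurable_const (a := c'))) (hFi.sub (integrable_const c')) (by
        filter_upwards [hae] with x ⟨k, hk⟩
        obtain ⟨n, hn⟩ := hk.exists
        refine ⟨n, ?_⟩
        have hs := hΦ.birkhoffSum_time_one hf hC n x
        have hsc : birkhoffSum (Φ 1) (fun _ : X => c') n x = n * c' := by simp [birkhoffSum]
        have hk0 : 0 ≤ 1 / ((k : ℝ) + 1) * n := by positivity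
        rw [birkhoffSum_sub, hs, hsc]
        nlinarith)
    have hI : ∫ x, (F - fun _ : X => c') x ∂μ = ∫ x, f x ∂μ - c' := by
      simp only [Pi.sub_apply]
      rw [integral_sub hFi (integrable_const c'), hΦ.integral_integral_orbit hμ.1 hf hC]
      simp
    linarith [hI ▸ hnn]
  filter_upwards [measure_eq_zero_iff_ae_notMem.1 hD0] with x hx
  obtain ⟨k, hk⟩ := exists_nat_one_div_lt (sub_pos.2 hcc')
  have : ∀ᶠ n : ℕ in atTop,
      ∫ s in (0 : ℝ)..n, f (Φ s x) ≤ (c' + 1 / ((k : ℝ) + 1)) * n := by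
    by_contra hcon
    exact hx ⟨k, (not_eventually.1 hcon).mono fun n hn => not_le.1 hn⟩
  filter_upwards [this] with n hn
  exact hn.trans (mul_le_mul_of_nonneg_right (by linarith) n.cast_nonneg)

end FlowAverages

section GenericPoints

variable {X : Type*} [MetricSpace X] [MeasurableSpace X] [BorelSpace X] {Φ : ℝ → X → X}

lemma tendsto_inv_mul_atTop_of_eventually_abs_sub_le {u : ℝ → ℝ} {m : ℝ}
    (h : ∀ k : ℕ, ∀ᶠ t in atTop, |u t - m * t| ≤ 1 / ((k : ℝ) + 1) * t) :
    Tendsto (fun t => t⁻¹ * u t) atTop (𝓝 m) := by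
  rw [Metric.tendsto_nhds]
  intro ε hε
  obtain ⟨k, hk⟩ := exists_nat_one_div_lt hε
  filter_upwards [h k, eventually_gt_atTop 0] with t ht ht0
  have : t⁻¹ * u t - m = t⁻¹ * (u t - m * t) := by field_simp
  rw [Real.dist_eq, this, abs_mul, abs_of_pos (inv_pos.2 ht0)]
  calc t⁻¹ * |u t - m * t| ≤ t⁻¹ * (1 / ((k : ℝ) + 1) * t) := by gcongr
    _ = 1 / ((k : ℝ) + 1) := by field_simp
    _ < ε := hk

lemma IsFlow.integral_empMeasure (hΦ : IsFlow Φ) {f : X → ℝ} (hf : Measurable f) (x : X) {t : ℝ}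
    (ht : 0 < t) : ∫ z, f z ∂(empMeasure Φ x t) = t⁻¹ * ∫ s in (0 : ℝ)..t, f (Φ s x) := by
  rw [empMeasure, integral_smul_measure,
    integral_map (hΦ.continuous_orbit x).measurable.aemeasurable hf.aestronglyMeasurable,
    intervalIntegral.integral_of_le ht.le, integral_Icc_eq_integral_Ioc,
    ENNReal.toReal_ofReal (by positivity), one_div, smul_eq_mul]

lemma IsFlow.isProbabilityMeasure_empMeasure (hΦ : IsFlow Φ) (x : X) {t : ℝ} (ht : 0 < t) :
    IsProbabilityMeasure (empMeasure Φ x t) := by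
  constructor
  rw [empMeasure, Measure.smul_apply, Measure.map_apply (hΦ.continuous_orbit x).measurable
    MeasurableSet.univ, preimage_univ, Measure.restrict_apply_univ, Real.volume_Icc, smul_eq_mul,
    ← ENNReal.ofReal_mul (by positivity), sub_zero, one_div, inv_mul_cancel₀ ht.ne',
    ENNReal.ofReal_one]

lemma abs_integral_sub_le_dist [CompactSpace X] (ν : Measure X) [IsProbabilityMeasure ν]
    (f g : C(X, ℝ)) : |∫ z, f z ∂ν - ∫ z, g z ∂ν| ≤ dist f g := by
  have hi : ∀ f : C(X, ℝ), Integrable f ν := fun f =>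
    Integrable.of_bound f.continuous.measurable.aestronglyMeasurable ‖f‖
      (ae_of_all _ f.norm_coe_le_norm)
  rw [← integral_sub (hi f) (hi g), ← Real.norm_eq_abs]
  refine (norm_integral_le_of_norm_le_const (C := dist f g) (ae_of_all _ fun z => ?_)).trans ?_
  · rw [← dist_eq_norm]
    exact ContinuousMap.dist_apply_le_dist z
  · simp

variable [SecondCountableTopology X] {μ : Measure X} [IsProbabilityMeasure μ]

/-- Pointwise ergodic theorem for bounded functions along a flow. -/
theorem FlowErgodic.ae_tendsto_integral_orbit (hμ : FlowErgodic Φ μ) (hΦ : IsFlow Φ)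
    {f : X → ℝ} {C : ℝ} (hf : Measurable f) (hC : ∀ x, |f x| ≤ C) :
    ∀ᵐ x ∂μ, Tendsto (fun t => t⁻¹ * ∫ s in (0 : ℝ)..t, f (Φ s x)) atTop (𝓝 (∫ x, f x ∂μ)) := by
  set m := ∫ x, f x ∂μ
  have hup : ∀ k : ℕ, ∀ᵐ x ∂μ, ∀ᶠ n : ℕ in atTop,
      ∫ s in (0 : ℝ)..n, f (Φ s x) ≤ (m + 1 / ((k : ℝ) + 1) / 2) * n := fun k =>
    hμ.ae_eventually_integral_orbit_le hΦ hf hC (lt_add_of_pos_right _ (by positivity))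
  have hlow : ∀ k : ℕ, ∀ᵐ x ∂μ, ∀ᶠ n : ℕ in atTop,
      ∫ s in (0 : ℝ)..n, -f (Φ s x) ≤ (-m + 1 / ((k : ℝ) + 1) / 2) * n := fun k =>
    hμ.ae_eventually_integral_orbit_le (f := fun x => -f x) hΦ hf.neg (fun x => by simpa using hC x)
      (by rw [integral_neg]; exact lt_add_of_pos_right _ (by positivity))
  filter_upwards [ae_all_iff.2 hup, ae_all_iff.2 hlow] with x hx1 hx2
  refine tendsto_inv_mul_atTop_of_eventually_abs_sub_le fun k => ?_
  have hk : (0 : ℝ) < 1 / ((k : ℝ) + 1) / 2 := by positivity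
  filter_upwards [(tendsto_nat_floor_atTop (α := ℝ)).eventually (hx1 k),
    (tendsto_nat_floor_atTop (α := ℝ)).eventually (hx2 k), eventually_ge_atTop 0,
    (tendsto_id.const_mul_atTop hk).eventually_ge_atTop (C + |m|)] with t h1 h2 ht0 h3
  have hfl := Nat.floor_le ht0
  have hfl' := Nat.lt_floor_add_one t
  have hi := hΦ.intervalIntegrable_orbit hf hC x
  have hsplit := intervalIntegral.integral_add_adjacent_intervals (hi 0 ⌊t⌋₊) (hi ⌊t⌋₊ t)
  have hC0 : 0 ≤ C := (abs_nonneg _).trans (hC x)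
  have hrest : |∫ s in (⌊t⌋₊ : ℝ)..t, f (Φ s x)| ≤ C := by
    refine (abs_integral_orbit_le hC x _ _).trans (mul_le_of_le_one_right hC0 ?_)
    rw [abs_of_nonneg (sub_nonneg.2 hfl)]
    linarith
  have hm1 : |m * (t - ⌊t⌋₊)| ≤ |m| := by
    rw [abs_mul, abs_of_nonneg (sub_nonneg.2 hfl)]
    exact mul_le_of_le_one_right (abs_nonneg m) (by linarith)
  rw [intervalIntegral.integral_neg] at h2
  have h4 := mul_le_mul_of_nonneg_left hfl hk.le
  simp only [id] at h3
  rw [abs_le] at hrest hm1 ⊢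
  constructor <;> nlinarith

/-- Almost every point is generic for an ergodic measure. -/
theorem FlowErgodic.ae_generic [CompactSpace X] (hμ : FlowErgodic Φ μ) (hΦ : IsFlow Φ) :
    ∀ᵐ x ∂μ, Generic Φ μ x := by
  have hdense : ∀ᵐ x ∂μ, ∀ k : ℕ, Tendsto
      (fun t => t⁻¹ * ∫ s in (0 : ℝ)..t, TopologicalSpace.denseSeq C(X, ℝ) k (Φ s x)) atTop
      (𝓝 (∫ x, TopologicalSpace.denseSeq C(X, ℝ) k x ∂μ)) :=
    ae_all_iff.2 fun k => hμ.ae_tendsto_integral_orbit hΦ (ContinuousMap.continuous _).measurable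
      (C := ‖TopologicalSpace.denseSeq C(X, ℝ) k‖)
      fun x => ContinuousMap.norm_coe_le_norm (TopologicalSpace.denseSeq C(X, ℝ) k) x
  filter_upwards [hdense] with x hx f
  rw [Metric.tendsto_nhds]
  intro ε hε
  obtain ⟨k, hk⟩ := (TopologicalSpace.denseRange_denseSeq C(X, ℝ)).exists_dist_lt f
    (show 0 < ε / 3 by positivity)
  filter_upwards [(Metric.tendsto_nhds.1 (hx k)) (ε / 3) (by positivity), eventually_gt_atTop 0]
    with t ht ht0
  rw [← hΦ.integral_empMeasure (ContinuousMap.continuous _).measurable x ht0] at ht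
  have := hΦ.isProbabilityMeasure_empMeasure x ht0
  have h1 := abs_integral_sub_le_dist (empMeasure Φ x t) f (TopologicalSpace.denseSeq C(X, ℝ) k)
  have h2 := abs_integral_sub_le_dist μ f (TopologicalSpace.denseSeq C(X, ℝ) k)
  rw [Real.dist_eq, abs_lt] at ht ⊢
  rw [abs_le] at h1 h2
  constructor <;> linarith

end GenericPoints

section Matching

lemma fPart_le_one {X : Type*} {Φ : ℝ → X → X} (P : ℕ → Set X) (t : ℝ) (x y : X) :
    fPart Φ P t x y ≤ 1 :=
  csInf_le ⟨0, by rintro ε (hε | rfl); exacts [hε.1.le, zero_le_one]⟩ (Or.inr rfl)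

lemma fPart_le_of_pMatchable {X : Type*} {Φ : ℝ → X → X} {P : ℕ → Set X} {t ε : ℝ}
    {x y : X} (hε : 0 < ε) (h : PMatchable Φ P x y t ε) : fPart Φ P t x y ≤ ε :=
  csInf_le ⟨0, by rintro ε (hε | rfl); exacts [hε.1.le, zero_le_one]⟩ (Or.inl ⟨hε, h⟩)

variable {X : Type*} [MetricSpace X] [MeasurableSpace X] [BorelSpace X] {Φ : ℝ → X → X}

/-- Discarding from a `Q`-matching the times at which either orbit visits
`⋃ j, P j \ Q (σ j)` leaves a `P`-matching. -/
lemma PMatchable.of_visits_le (hΦ : IsFlow Φ) (P Q : BPartition X) (σ : Equiv.Perm ℕ)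
    {x y : X} {t ε ε' κ : ℝ} (ht : 0 < t) (hε : 0 < ε) (hε1 : ε < 1) (hκ : 0 ≤ κ)
    (hε' : ε' ≤ 1) (hle : ε + κ + κ / (1 - ε) ≤ ε')
    (hx : volume.real (Icc 0 t ∩ {s | Φ s x ∈ ⋃ j, P.cells j \ Q.cells (σ j)}) ≤ κ * t)
    (hy : volume.real (Icc 0 t ∩ {s | Φ s y ∈ ⋃ j, P.cells j \ Q.cells (σ j)}) ≤ κ * t)
    (h : PMatchable Φ Q.cells x y t ε) : PMatchable Φ P.cells x y t ε' := by
  obtain ⟨A, A', h, h', hA, hA', hAs, hAs', hvA, hvA', hmaps, hsurj, hmono, hvol, hder, hQ⟩ := h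
  set E : Set X := ⋃ j, P.cells j \ Q.cells (σ j)
  have hE : MeasurableSet E :=
    MeasurableSet.iUnion fun j => (P.measurable j).diff (Q.measurable (σ j))
  have hor : ∀ z, MeasurableSet {s | Φ s z ∈ E} := fun z =>
    (hΦ.continuous_orbit z).measurable hE
  have hImg : h '' A = A' := hmaps.image_subset.antisymm hsurj
  have hfin : ∀ B ⊆ Icc 0 t, volume B ≠ ∞ := fun B hB =>
    measure_ne_top_of_subset hB measure_Icc_lt_top.ne
  have hint : IntegrableOn h' A := by
    by_contra hcon
    have := hvol A Subset.rfl hA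
    rw [hImg, integral_undef hcon, ENNReal.ofReal_zero] at this
    simp [this] at hvA'
  have hbounds : ∀ B ⊆ A, MeasurableSet B → (1 - ε) * volume.real B ≤ volume.real (h '' B) ∧
      volume.real (h '' B) ≤ (1 + ε) * volume.real B := by
    intro B hB hBm
    have hBi : IntegrableOn h' B := hint.mono_set hB
    have hc : ∀ c : ℝ, IntegrableOn (fun _ => c) B := fun c =>
      integrableOn_const (hfin B (hB.trans hAs))
    have hlo := setIntegral_mono_on (hc (1 - ε)) hBi hBm
      fun s hs => by linarith [(abs_lt.1 (hder s (hB hs))).1]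
    have hhi := setIntegral_mono_on hBi (hc (1 + ε)) hBm
      fun s hs => by linarith [(abs_lt.1 (hder s (hB hs))).2]
    rw [setIntegral_const, smul_eq_mul, mul_comm] at hlo hhi
    have hnn : 0 ≤ ∫ s in B, h' s :=
      (mul_nonneg (by linarith) measureReal_nonneg).trans hlo
    rw [measureReal_def (s := h '' B), hvol B hB hBm, ENNReal.toReal_ofReal hnn]
    exact ⟨hlo, hhi⟩
  set Bx : Set ℝ := A ∩ {s | Φ s x ∈ E}
  set By' : Set ℝ := A' ∩ {s | Φ s y ∈ E}
  set By : Set ℝ := A ∩ h ⁻¹' By'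
  have hBx : MeasurableSet Bx := hA.inter (hor x)
  have hBy' : MeasurableSet By' := hA'.inter (hor y)
  have hhBy : h '' By = By' := by
    rw [image_inter_preimage, hImg]
    exact inter_eq_right.2 inter_subset_left
  have hBy : MeasurableSet By := by
    have hleft : LeftInvOn (Function.invFunOn h A) h A := hmono.injOn.leftInvOn_invFunOn
    have hgBy : Function.invFunOn h A '' By' = By := by
      rw [← hhBy]
      exact (hleft.mono inter_subset_left).image_image
    rw [← hgBy]
    refine hBy'.image_of_monotoneOn ?_
    rw [← hhBy]
    rintro _ ⟨a, ha, rfl⟩ _ ⟨b, hb, rfl⟩ hab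
    rw [hleft ha.1, hleft hb.1]
    exact (hmono.le_iff_le ha.1 hb.1).1 hab
  have hU : MeasurableSet (Bx ∪ By) := hBx.union hBy
  have hUA : Bx ∪ By ⊆ A := union_subset inter_subset_left inter_subset_left
  have hvBx : volume.real Bx ≤ κ * t :=
    (measureReal_mono (inter_subset_inter_left _ hAs) (hfin _ inter_subset_left)).trans hx
  have hvBy' : volume.real (h '' By) ≤ κ * t := by
    rw [hhBy]
    exact (measureReal_mono (inter_subset_inter_left _ hAs') (hfin _ inter_subset_left)).trans hy
  have hvhBx : volume.real (h '' Bx) ≤ (1 + ε) * (κ * t) :=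
    (hbounds Bx inter_subset_left hBx).2.trans (by gcongr)
  have h1ε : 0 < 1 - ε := by linarith
  have hvBy : volume.real By ≤ κ / (1 - ε) * t := by
    have := (hbounds By inter_subset_left hBy).1.trans hvBy'
    rw [div_mul_eq_mul_div, le_div_iff₀ h1ε]
    linarith
  have hκε : (1 + ε) * κ ≤ κ / (1 - ε) := by
    rw [le_div_iff₀ h1ε]
    nlinarith [mul_nonneg hκ (sq_nonneg ε)]
  have hlt : ∀ {B : Set ℝ} {r : ℝ}, 0 ≤ r → B ⊆ Icc 0 t →
      (ENNReal.ofReal (r * t) < volume B ↔ r * t < volume.real B) := fun hr hB =>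
    ENNReal.ofReal_lt_iff_lt_toReal (mul_nonneg hr ht.le) (hfin _ hB)
  rw [hlt h1ε.le hAs] at hvA
  rw [hlt h1ε.le hAs'] at hvA'
  have hImgDiff : h '' (A \ (Bx ∪ By)) = A' \ h '' (Bx ∪ By) := by
    rw [← hImg]
    exact hmono.injOn.image_sdiff_subset hUA
  have hmonoU := (hmono.mono hUA).monotoneOn
  have hUm : MeasurableSet (h '' (Bx ∪ By)) := hU.image_of_monotoneOn hmonoU
  have hκt := mul_le_mul_of_nonneg_right hκε ht.le
  have hlet := mul_le_mul_of_nonneg_right hle ht.le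
  refine ⟨A \ (Bx ∪ By), h '' (A \ (Bx ∪ By)), h, h', hA.diff hU, ?_, sdiff_subset.trans hAs,
    ?_, ?_, ?_, mapsTo_image _ _, surjOn_image _ _, hmono.mono sdiff_subset,
    fun B hB => hvol B (hB.trans sdiff_subset), fun s hs => (hder s hs.1).trans_le ?_, ?_⟩
  · rw [hImgDiff]
    exact hA'.diff hUm
  · rw [hImgDiff]
    exact sdiff_subset.trans hAs'
  · rw [hlt (by linarith) (sdiff_subset.trans hAs),
      measureReal_sdiff hUA hU (hfin _ hAs)]
    have := measureReal_union_le (μ := volume) Bx By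
    linarith
  · rw [hImgDiff, hlt (by linarith) (sdiff_subset.trans hAs'),
      measureReal_sdiff ((image_mono hUA).trans hImg.subset) hUm (hfin _ hAs'), image_union]
    have := measureReal_union_le (μ := volume) (h '' Bx) (h '' By)
    linarith
  · have : 0 ≤ κ / (1 - ε) := div_nonneg hκ h1ε.le
    linarith
  · rintro s ⟨hsA, hs⟩ j
    have hxE : Φ s x ∉ E := fun hc => hs (Or.inl ⟨hsA, hc⟩)
    have hyE : Φ (h s) y ∉ E := fun hc => hs (Or.inr ⟨hsA, hmaps hsA, hc⟩)
    have key : ∀ z ∉ E, ∀ i, z ∈ P.cells i ↔ z ∈ Q.cells (σ i) := by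
      intro z hz i
      have hsub : ∀ i, z ∈ P.cells i → z ∈ Q.cells (σ i) := fun i hi => by
        by_contra hcon
        exact hz (mem_iUnion.2 ⟨i, hi, hcon⟩)
      refine ⟨hsub i, fun hi => ?_⟩
      obtain ⟨k, hk⟩ := mem_iUnion.1 (P.cover.symm.subset (mem_univ z))
      by_contra hcon
      have hne : σ k ≠ σ i := fun heq => hcon (σ.injective heq ▸ hk)
      exact disjoint_left.1 (Q.disj hne) (hsub k hk) hi
    rw [key _ hxE, key _ hyE]
    exact hQ s hsA (σ j)

lemma fPart_le_of_visits_le (hΦ : IsFlow Φ) (P Q : BPartition X) (σ : Equiv.Perm ℕ)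
    {x y : X} {t d δ : ℝ} (ht : 0 < t) (hd : 0 ≤ d) (hδ : 0 < δ)
    (hx : volume.real (Icc 0 t ∩ {s | Φ s x ∈ ⋃ j, P.cells j \ Q.cells (σ j)}) ≤ (d + δ / 4) * t)
    (hy : volume.real (Icc 0 t ∩ {s | Φ s y ∈ ⋃ j, P.cells j \ Q.cells (σ j)}) ≤ (d + δ / 4) * t) :
    fPart Φ P.cells t x y ≤ 4 * fPart Φ Q.cells t x y + 2 * d + δ := by
  suffices (fPart Φ P.cells t x y - 2 * d - δ) / 4 ≤ fPart Φ Q.cells t x y by linarith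
  have hone := fPart_le_one (Φ := Φ) P.cells t x y
  refine le_csInf ⟨1, Or.inr rfl⟩ ?_
  rintro ε (⟨hε, hmatch⟩ | rfl)
  · rcases le_or_gt 1 (4 * ε + 2 * d + δ) with hbig | hsmall
    · linarith
    · have hdiv : (d + δ / 4) / (1 - ε) ≤ (d + δ / 4) * (1 + 2 * ε) := by
        rw [div_le_iff₀ (by linarith)]
        have : 0 ≤ (d + δ / 4) * (ε * (1 - 2 * ε)) :=
          mul_nonneg (by linarith) (mul_nonneg hε.le (by linarith))
        nlinarith
      have := fPart_le_of_pMatchable (by linarith)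
        (PMatchable.of_visits_le hΦ P Q σ (ε' := 4 * ε + 2 * d + δ) ht hε (by linarith)
          (by linarith) hsmall.le (by nlinarith) hx hy hmatch)
      linarith
  · change _ ≤ (1 : ℝ)
    linarith

end Matching

section Visits

variable {X : Type*} [MetricSpace X] [MeasurableSpace X] [BorelSpace X] {Φ : ℝ → X → X}

lemma IsFlow.integral_orbit_indicator (hΦ : IsFlow Φ) {E : Set X} (hE : MeasurableSet E) (x : X)
    {T : ℝ} (hT : 0 ≤ T) :
    ∫ s in (0 : ℝ)..T, E.indicator 1 (Φ s x) = volume.real (Icc 0 T ∩ {s | Φ s x ∈ E}) := by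
  have hm : MeasurableSet {s | Φ s x ∈ E} := (hΦ.continuous_orbit x).measurable hE
  have hcomp : (fun s => E.indicator (1 : X → ℝ) (Φ s x)) = {s | Φ s x ∈ E}.indicator 1 := rfl
  rw [intervalIntegral.integral_of_le hT, ← integral_Icc_eq_integral_Ioc, hcomp,
    integral_indicator_one hm, measureReal_restrict_apply hm, inter_comm]

variable [SecondCountableTopology X] {μ : Measure X} [IsProbabilityMeasure μ]

/-- Off a set of small measure, the time spent in `E` is uniformly controlled. -/
lemma FlowErgodic.exists_measurableSet_visits_le (hμ : FlowErgodic Φ μ) (hΦ : IsFlow Φ)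
    {p : X → Prop} (hp : ∀ᵐ x ∂μ, p x) {E : Set X} (hE : MeasurableSet E) {κ δ : ℝ}
    (hκ : μ.real E < κ) (hδ : 0 < δ) :
    ∃ (H : Set X) (t₀ : ℝ), MeasurableSet H ∧ H ⊆ {z | p z} ∧ ENNReal.ofReal (1 - δ) < μ H ∧
      1 < t₀ ∧ ∀ x ∈ H, ∀ t : ℝ, t₀ ≤ t →
        volume.real (Icc 0 t ∩ {s | Φ s x ∈ E}) ≤ κ * t := by
  obtain ⟨c, hc, hcκ⟩ := exists_between hκ
  have hc0 : 0 ≤ c := measureReal_nonneg.trans hc.le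
  have hfm : Measurable (E.indicator (1 : X → ℝ)) := measurable_one.indicator hE
  have hfC : ∀ x, |E.indicator (1 : X → ℝ) x| ≤ 1 := fun x => by
    by_cases hx : x ∈ E <;> simp [hx]
  have hev := hμ.ae_eventually_integral_orbit_le hΦ hfm hfC (c := c)
    (by rwa [integral_indicator_one hE])
  obtain ⟨G, hG, hGm, hGp⟩ := hp.exists_measurable_mem
  set S : ℕ → Set X := fun N => G ∩ ⋂ n : ℕ, ⋂ _ : N ≤ n,
    {x | ∫ s in (0 : ℝ)..n, E.indicator (1 : X → ℝ) (Φ s x) ≤ c * n}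
  have hSm : ∀ N, MeasurableSet (S N) := fun N =>
    hGm.inter (MeasurableSet.iInter fun n => MeasurableSet.iInter fun _ =>
      measurableSet_le (hΦ.measurable_integral_orbit hfm _ _) measurable_const)
  have hSmono : Monotone S := fun N M hNM => inter_subset_inter_right _
    (iInter_mono fun n => iInter_mono' fun h => ⟨hNM.trans h, Subset.rfl⟩)
  have hfull : μ (⋃ N, S N) = 1 := by
    rw [← mem_ae_iff_prob_eq_one (MeasurableSet.iUnion hSm)]
    filter_upwards [hG, hev] with x hxG hx
    obtain ⟨N, hN⟩ := eventually_atTop.1 hx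
    exact mem_iUnion.2 ⟨N, hxG, mem_iInter₂.2 hN⟩
  have htend := tendsto_measure_iUnion_atTop (μ := μ) hSmono
  rw [hfull] at htend
  obtain ⟨N, hN⟩ := (htend.eventually_const_lt
    (show ENNReal.ofReal (1 - δ) < 1 by simpa using hδ)).exists
  refine ⟨S N, max (max N 2) (c / (κ - c)), hSm N, fun x hx => hGp x hx.1, hN, ?_, ?_⟩
  · exact one_lt_two.trans_le ((le_max_right _ _).trans (le_max_left _ _))
  · intro x hx t ht
    have htN : (N : ℝ) ≤ t := ((le_max_left _ _).trans (le_max_left _ _)).trans ht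
    have ht0 : 0 ≤ t := N.cast_nonneg.trans htN
    have htc : c ≤ t * (κ - c) := (div_le_iff₀ (sub_pos.2 hcκ)).1 ((le_max_right _ _).trans ht)
    have hceil : t ≤ ⌈t⌉₊ := Nat.le_ceil t
    have hbound := mem_iInter₂.1 hx.2 ⌈t⌉₊ (by exact_mod_cast htN.trans hceil)
    rw [mem_ofPred_eq, hΦ.integral_orbit_indicator hE x (Nat.cast_nonneg _)] at hbound
    have hmono : volume.real (Icc 0 t ∩ {s | Φ s x ∈ E}) ≤
        volume.real (Icc 0 (⌈t⌉₊ : ℝ) ∩ {s | Φ s x ∈ E}) :=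
      measureReal_mono (inter_subset_inter_left _ (Icc_subset_Icc_right hceil))
        (measure_ne_top_of_subset inter_subset_left measure_Icc_lt_top.ne)
    have := mul_le_mul_of_nonneg_left (Nat.ceil_lt_add_one ht0).le hc0
    linarith

end Visits

theorem stmt8 {X : Type*} [MetricSpace X] [CompactSpace X] [MeasurableSpace X] [BorelSpace X] (Φ : ℝ → X → X) (hΦ : IsFlow Φ)
    (μ : Measure X) [IsProbabilityMeasure μ] (hμ : FlowErgodic Φ μ)
    (P Q : BPartition X) (δ : ℝ) (hδ : 0 < δ) :
    ∃ (H : Set X) (t₀ : ℝ), MeasurableSet H ∧ H ⊆ {z | Generic Φ μ z} ∧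
      ENNReal.ofReal (1 - δ) < μ H ∧ 1 < t₀ ∧
      ∀ x ∈ H, ∀ y ∈ H, ∀ t : ℝ, t₀ ≤ t →
        fPart Φ P.cells t x y ≤
          4 * fPart Φ Q.cells t x y + 2 * dPart μ P.cells Q.cells + δ := by
  have hd0 : 0 ≤ dPart μ P.cells Q.cells := Real.iInf_nonneg fun σ => ENNReal.toReal_nonneg
  obtain ⟨σ, hσ⟩ := exists_lt_of_ciInf_lt
    (show dPart μ P.cells Q.cells < dPart μ P.cells Q.cells + δ / 4 by linarith)
  obtain ⟨H, t₀, hHm, hHg, hHμ, ht₀, hH⟩ :=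
    hμ.exists_measurableSet_visits_le hΦ (hμ.ae_generic hΦ)
      (MeasurableSet.iUnion fun j => (P.measurable j).diff (Q.measurable (σ j))) hσ hδ
  exact ⟨H, t₀, hHm, hHg, hHμ, ht₀, fun x hx y hy t ht =>
    fPart_le_of_visits_le hΦ P Q σ (by linarith) hd0 hδ (hH x hx t ht) (hH y hy t ht)⟩
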